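/- arXiv:1504.03257 — 2 statements merged into one kernel-verified Lean document; each statement's English description precedes it below -/
import Mathlib

section
/- Any mechanism φ such that, for every preference profile P, φ(P) assigns probability 1 to the set of matchings that are stable at P, is interim pairwise stable. -/
open scoped ENNReal

namespace Unraveling

variable (M W : Type*) [Fintype M] [DecidableEq M] [Fintype W] [DecidableEq W]

/-- A matching between men `M` and women `W`.  `Sum.inl m` denotes man `m`,
`Sum.inr w` denotes woman `w`; `toFun a = a` means agent `a` is unmatched. -/
structure Matching where
  toFun : M ⊕ W → M ⊕ W
  man_range : ∀ m : M, toFun (Sum.inl m) = Sum.inl m ∨ ∃ w : W, toFun (Sum.inl m) = Sum.inr w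
  woman_range : ∀ w : W, toFun (Sum.inr w) = Sum.inr w ∨ ∃ m : M, toFun (Sum.inr w) = Sum.inl m
  mutual_cond : ∀ (m : M) (w : W), toFun (Sum.inl m) = Sum.inr w ↔ toFun (Sum.inr w) = Sum.inl m

/-- A preference profile: each man has a ranking (a bijection onto `{1,…,|W|+1}`,
encoded as an `Equiv` onto `Fin (|W|+1)`) of the women together with the option
(`none`) of remaining unmatched, and symmetrically for women. -/
structure Profile where
  mpref : M → (Option W ≃ Fin (Fintype.card W + 1))
  wpref : W → (Option M ≃ Fin (Fintype.card M + 1))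

variable {M W}

/-- The partner of man `m` under matching `μ` (`none` if unmatched). -/
def Matching.partnerM (μ : Matching M W) (m : M) : Option W :=
  match μ.toFun (Sum.inl m) with
  | Sum.inl _ => none
  | Sum.inr w => some w

/-- The partner of woman `w` under matching `μ` (`none` if unmatched). -/
def Matching.partnerW (μ : Matching M W) (w : W) : Option M :=
  match μ.toFun (Sum.inr w) with
  | Sum.inr _ => none
  | Sum.inl m => some m

/-- The rank (`1` = most preferred) that man `m` assigns to `o` under profile `P`. -/
def mrank (P : Profile M W) (m : M) (o : Option W) : ℕ := (P.mpref m o : ℕ) + 1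

/-- The rank (`1` = most preferred) that woman `w` assigns to `o` under profile `P`. -/
def wrank (P : Profile M W) (w : W) (o : Option M) : ℕ := (P.wpref w o : ℕ) + 1

/-- The rank that agent `a` assigns to his/her partner under matching `μ`. -/
def prank (P : Profile M W) (μ : Matching M W) : M ⊕ W → ℕ
  | Sum.inl m => mrank P m (μ.partnerM m)
  | Sum.inr w => wrank P w (μ.partnerW w)

/-- The rank that agent `a` assigns to remaining unmatched. -/
def urank (P : Profile M W) : M ⊕ W → ℕ
  | Sum.inl m => mrank P m none
  | Sum.inr w => wrank P w none

/-- Stability of a matching at a profile. -/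
def IsStable (P : Profile M W) (μ : Matching M W) : Prop :=
  (∀ a : M ⊕ W, prank P μ a ≤ urank P a) ∧
  (∀ (m : M) (w : W), mrank P m (some w) < prank P μ (Sum.inl m) →
     prank P μ (Sum.inr w) < wrank P w (some m))

/-- A mechanism maps each preference profile to a probability distribution over matchings. -/
abbrev Mechanism (M W : Type*) [Fintype M] [DecidableEq M] [Fintype W] [DecidableEq W] :=
  Profile M W → PMF (Matching M W)

/-- The probability that `p` assigns to the set `s`. -/
noncomputable def prob {α : Type*} (p : PMF α) (s : Set α) : ℝ≥0∞ :=
  ∑' x, s.indicator (fun y => p y) x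

/-- CDF of the rank that agent `a` assigns to his/her random partner, when the
matching is drawn from `p` and the profile is `P`. -/
noncomputable def cdfAt (P : Profile M W) (p : PMF (Matching M W)) (a : M ⊕ W) (n : ℕ) : ℝ≥0∞ :=
  prob p {μ | prank P μ a ≤ n}

/-- `SD F G` : the rank distribution with CDF `F` strictly first-order
stochastically dominates the one with CDF `G`. -/
def SD (F G : ℕ → ℝ≥0∞) : Prop := (∀ n, G n ≤ F n) ∧ ∃ n, G n < F n

/-- A coalition consisting of at most one man and at most one woman. -/
def IsPairCoalition (A' : Set (M ⊕ W)) : Prop :=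
  {m : M | Sum.inl m ∈ A'}.Subsingleton ∧ {w : W | Sum.inr w ∈ A'}.Subsingleton

/-- Coalition `A'` blocks mechanism `φ` ex-post at profile `P`. -/
def BlocksExPost (A' : Set (M ⊕ W)) (φ : Mechanism M W) (P : Profile M W) : Prop :=
  A'.Nonempty ∧ ∃ φ' : Mechanism M W,
    (∀ a ∈ A', prob (φ' P) {μ | μ.toFun a ∈ A'} = 1) ∧
    (∀ a ∈ A', SD (cdfAt P (φ' P) a) (cdfAt P (φ P) a))

def ExPostStable (φ : Mechanism M W) : Prop :=
  ∀ (P : Profile M W) (A' : Set (M ⊕ W)), ¬ BlocksExPost A' φ P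

def ExPostPairwiseStable (φ : Mechanism M W) : Prop :=
  ∀ (P : Profile M W) (A' : Set (M ⊕ W)), IsPairCoalition A' → ¬ BlocksExPost A' φ P

/-- Ex-ante CDF of the rank of agent `a`'s partner under mechanism `φ`, when
the profile is drawn from prior `ψ`. -/
noncomputable def cdfExAnte (ψ : PMF (Profile M W)) (φ : Mechanism M W) (a : M ⊕ W) (n : ℕ) : ℝ≥0∞ :=
  ∑' P, ψ P * cdfAt P (φ P) a n

/-- Coalition `A'` blocks mechanism `φ` ex-ante at prior `ψ`. -/
def BlocksExAnte (A' : Set (M ⊕ W)) (φ : Mechanism M W) (ψ : PMF (Profile M W)) : Prop :=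
  A'.Nonempty ∧ ∃ φ' : Mechanism M W,
    (∀ a ∈ A', (∑' P, ψ P * prob (φ' P) {μ | μ.toFun a ∈ A'}) = 1) ∧
    (∀ a ∈ A', SD (cdfExAnte ψ φ' a) (cdfExAnte ψ φ a))

def ExAnteStableAt (φ : Mechanism M W) (ψ : PMF (Profile M W)) : Prop :=
  ∀ A' : Set (M ⊕ W), ¬ BlocksExAnte A' φ ψ

def ExAnteStable (φ : Mechanism M W) : Prop := ∀ ψ, ExAnteStableAt φ ψ

def ExAntePairwiseStable (φ : Mechanism M W) : Prop :=
  ∀ (ψ : PMF (Profile M W)) (A' : Set (M ⊕ W)), IsPairCoalition A' → ¬ BlocksExAnte A' φ ψ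

/-- `prefEq P P' a` : profiles `P` and `P'` give agent `a` the same preferences. -/
def prefEq (P P' : Profile M W) : M ⊕ W → Prop
  | Sum.inl m => P.mpref m = P'.mpref m
  | Sum.inr w => P.wpref w = P'.wpref w

/-- The event `Y_a(P̃_a)`: profiles in which `a`'s preferences agree with `Pt`
and every other member of the coalition `A'` has preferences in his/her
acceptance set `R`. -/
def interimEvent (A' : Set (M ⊕ W)) (R : (M ⊕ W) → Set (Profile M W)) (a : M ⊕ W)
    (Pt : Profile M W) : Set (Profile M W) :=
  {P | prefEq P Pt a ∧ ∀ a' ∈ A', a' ≠ a → P ∈ R a'}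

/-- CDF of the rank of `a`'s partner under `φ`, with the profile drawn from `ψ`
conditioned on the event `Y`. -/
noncomputable def cdfCond (ψ : PMF (Profile M W)) (Y : Set (Profile M W)) (φ : Mechanism M W)
    (a : M ⊕ W) (n : ℕ) : ℝ≥0∞ :=
  (∑' P, Y.indicator (fun P' => ψ P' * cdfAt P' (φ P') a n) P) / prob ψ Y

/-- Coalition `A'` blocks mechanism `φ` in the interim at prior `ψ`.  Each `R a`
is the set of profiles in which `a`'s preferences are ones at which `a` agrees to
deviate; it is required to depend only on `a`'s own preferences. -/
def BlocksInterim (A' : Set (M ⊕ W)) (φ : Mechanism M W) (ψ : PMF (Profile M W)) : Prop :=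
  A'.Nonempty ∧ ∃ (φ' : Mechanism M W) (R : (M ⊕ W) → Set (Profile M W)),
    (∀ (a : M ⊕ W) (P P' : Profile M W), prefEq P P' a → (P ∈ R a ↔ P' ∈ R a)) ∧
    (∀ a ∈ A', ∀ P : Profile M W, prob (φ' P) {μ | μ.toFun a ∈ A'} = 1) ∧
    (∀ a ∈ A', ∀ Pt : Profile M W,
      Pt ∈ R a ↔ (0 < prob ψ (interimEvent A' R a Pt) ∧
        SD (cdfCond ψ (interimEvent A' R a Pt) φ' a)
           (cdfCond ψ (interimEvent A' R a Pt) φ a))) ∧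
    0 < prob ψ {P | ∀ a ∈ A', P ∈ R a}

def InterimStableAt (φ : Mechanism M W) (ψ : PMF (Profile M W)) : Prop :=
  ∀ A' : Set (M ⊕ W), ¬ BlocksInterim A' φ ψ

def InterimStable (φ : Mechanism M W) : Prop := ∀ ψ, InterimStableAt φ ψ

def InterimPairwiseStable (φ : Mechanism M W) : Prop :=
  ∀ (ψ : PMF (Profile M W)) (A' : Set (M ⊕ W)), IsPairCoalition A' → ¬ BlocksInterim A' φ ψ

/-- `MRanks P m rw ru` : man `m` assigns rank `rw w` to each woman `w` and
rank `ru` to remaining unmatched. -/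
def MRanks (P : Profile M W) (m : M) (rw : W → ℕ) (ru : ℕ) : Prop :=
  (∀ w, mrank P m (some w) = rw w) ∧ mrank P m none = ru

/-- `WRanks P w rm ru` : woman `w` assigns rank `rm m` to each man `m` and
rank `ru` to remaining unmatched. -/
def WRanks (P : Profile M W) (w : W) (rm : M → ℕ) (ru : ℕ) : Prop :=
  (∀ m, wrank P w (some m) = rm m) ∧ wrank P w none = ru

instance (P : Profile M W) (m : M) (rw : W → ℕ) (ru : ℕ) : Decidable (MRanks P m rw ru) :=
  decidable_of_iff ((∀ w, mrank P m (some w) = rw w) ∧ mrank P m none = ru) Iff.rfl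

instance (P : Profile M W) (w : W) (rm : M → ℕ) (ru : ℕ) : Decidable (WRanks P w rm ru) :=
  decidable_of_iff ((∀ m, wrank P w (some m) = rm m) ∧ wrank P w none = ru) Iff.rfl

/-- The perfect matching induced by a bijection `e : M ≃ W`. -/
def matchingOf (e : M ≃ W) : Matching M W where
  toFun a :=
    match a with
    | Sum.inl m => Sum.inr (e m)
    | Sum.inr w => Sum.inl (e.symm w)
  man_range m := Or.inr ⟨e m, rfl⟩
  woman_range w := Or.inr ⟨e.symm w, rfl⟩
  mutual_cond m w := by
    constructor
    · intro h
      simp only [Sum.inr.injEq] at h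
      simp [← h]
    · intro h
      simp only [Sum.inl.injEq] at h
      simp [← h]

/-- `P'` is the permutation of profile `P` obtained by (`σM`, `σW`):
`P_a(a') = P'_{σ(a)}(σ(a'))` for all agents `a` and all `a'` in the domain of `P_a`. -/
def IsPermutedProfile (σM : Equiv.Perm M) (σW : Equiv.Perm W) (P P' : Profile M W) : Prop :=
  (∀ m w, P'.mpref (σM m) (some (σW w)) = P.mpref m (some w)) ∧
  (∀ m, P'.mpref (σM m) none = P.mpref m none) ∧
  (∀ w m, P'.wpref (σW w) (some (σM m)) = P.wpref w (some m)) ∧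
  (∀ w, P'.wpref (σW w) none = P.wpref w none)

/-- Probability (jointly over the profile drawn from `ψ` and the internal
randomization of `φ`) that agent `a` is assigned a partner of rank exactly `k`. -/
noncomputable def probRankEq (ψ : PMF (Profile M W)) (φ : Mechanism M W) (a : M ⊕ W) (k : ℕ) : ℝ≥0∞ :=
  ∑' P, ψ P * prob (φ P) {μ | prank P μ a = k}

/-- CDF of a distribution on ranks `{1,2,3}` with probabilities `q1`, `q2`, `q3`. -/
def cdf3 (q1 q2 q3 : ℝ) (n : ℕ) : ℝ :=
  (if 1 ≤ n then q1 else 0) + (if 2 ≤ n then q2 else 0) + (if 3 ≤ n then q3 else 0)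

/-- Strict first-order stochastic dominance for real-valued rank CDFs. -/
def SDR (F G : ℕ → ℝ) : Prop := (∀ n, G n ≤ F n) ∧ ∃ n, G n < F n

end Unraveling

namespace Unraveling

variable {M W : Type*} [Fintype M] [DecidableEq M] [Fintype W] [DecidableEq W]

/-!
Suppose a coalition blocks, and let `a` be one of its members. The alternative mechanism `φ'` can
only leave `a` single or match `a` to the other member `b`, if there is one. As `φ` is individually
rational, this can dominate `φ` for `a` only if `a` prefers `b` to remaining single; then `φ'` never
gives `a` anything better than `b`, and by dominance neither does `φ`. The same holds for `b`, so
whenever both members are willing to deviate, `φ` never gives `b` anything better than `a`, and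
stability implies that `φ` never gives `a` anything worse than `b`. Hence `φ'` never improves on `φ`
for `a`, whatever profile and matchings are realized, contradicting dominance.
-/

section RankOf

omit [DecidableEq M] [DecidableEq W]

/-- The rank `P_a(b)` that agent `a` assigns to agent `b`, for men and women alike. Since a
`Matching` never pairs distinct agents on the same side, any such `b` stands, like `a` itself, for
remaining unmatched. -/
def rankOf (P : Profile M W) : M ⊕ W → M ⊕ W → ℕ
  | .inl m, .inl _ => mrank P m none
  | .inl m, .inr w => mrank P m (some w)
  | .inr w, .inl m => wrank P w (some m)
  | .inr w, .inr _ => wrank P w none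

theorem rankOf_self (P : Profile M W) (a : M ⊕ W) : rankOf P a a = urank P a := by
  cases a <;> rfl

theorem prank_eq_rankOf (P : Profile M W) (μ : Matching M W) (a : M ⊕ W) :
    prank P μ a = rankOf P a (μ.toFun a) := by
  rcases a with m | w
  · rcases hm : μ.toFun (.inl m) with _ | _ <;>
      simp only [prank, Matching.partnerM, rankOf, hm]
  · rcases hw : μ.toFun (.inr w) with _ | _ <;>
      simp only [prank, Matching.partnerW, rankOf, hw]

theorem rankOf_congr {P Q : Profile M W} {a : M ⊕ W} (h : prefEq P Q a) (b : M ⊕ W) :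
    rankOf P a b = rankOf Q a b := by
  cases a <;> cases b <;> simp only [prefEq] at h <;> simp only [rankOf, mrank, wrank, h]

theorem prefEq_refl (P : Profile M W) (a : M ⊕ W) : prefEq P P a := by
  cases a <;> rfl

theorem mrank_injective (P : Profile M W) (m : M) : Function.Injective (mrank P m) :=
  fun _ _ h => (P.mpref m).injective (Fin.ext (Nat.succ_injective h))

theorem toFun_inl_eq_inr_of_prank_eq {P : Profile M W} {μ : Matching M W} {m : M} {w : W}
    (h : prank P μ (.inl m) = mrank P m (some w)) : μ.toFun (.inl m) = .inr w := by
  have hpartner : μ.partnerM m = some w := mrank_injective P m h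
  unfold Matching.partnerM at hpartner
  split at hpartner
  · contradiction
  · simp_all only [Option.some.injEq]

theorem IsStable.prank_le_rankOf {P : Profile M W} {μ : Matching M W} (hμ : IsStable P μ)
    {a b : M ⊕ W} (hb : rankOf P b a ≤ prank P μ b) : prank P μ a ≤ rankOf P a b := by
  rcases a with m | w <;> rcases b with m' | w'
  · exact hμ.1 (.inl m)
  · exact not_lt.1 fun hlt => (hμ.2 m w' hlt).not_ge hb
  · -- `IsStable` is phrased from the man's side; strictness of preferences reverses the roles.
    by_contra! hlt
    have hm : prank P μ (.inl m') ≤ mrank P m' (some w) :=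
      not_lt.1 fun h => (hμ.2 m' w h).not_gt hlt
    have hw : μ.toFun (.inr w) = .inl m' :=
      (μ.mutual_cond m' w).1 (toFun_inl_eq_inr_of_prank_eq (hm.antisymm hb))
    rw [prank_eq_rankOf, hw] at hlt
    exact hlt.false
  · exact hμ.1 (.inr w)

end RankOf

section Prob

variable {α : Type*} {p : PMF α} {s : Set α}

theorem prob_eq_toOuterMeasure (p : PMF α) (s : Set α) : prob p s = p.toOuterMeasure s :=
  (p.toOuterMeasure_apply s).symm

theorem prob_eq_one_iff : prob p s = 1 ↔ p.support ⊆ s := by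
  rw [prob_eq_toOuterMeasure, PMF.toOuterMeasure_apply_eq_one_iff]

theorem prob_eq_zero_iff : prob p s = 0 ↔ Disjoint p.support s := by
  rw [prob_eq_toOuterMeasure, PMF.toOuterMeasure_apply_eq_zero_iff]

theorem prob_le_one (p : PMF α) (s : Set α) : prob p s ≤ 1 := by
  rw [← p.tsum_coe]
  exact ENNReal.tsum_le_tsum (Set.indicator_le_self s p)

end Prob

theorem sd_iff_lt {F G : ℕ → ℝ≥0∞} : SD F G ↔ G < F :=
  Pi.lt_def.symm

section Cdf

omit [DecidableEq M] [DecidableEq W]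

theorem cdfAt_eq_zero_iff {P : Profile M W} {p : PMF (Matching M W)} {a : M ⊕ W} {n : ℕ} :
    cdfAt P p a n = 0 ↔ ∀ μ ∈ p.support, n < prank P μ a := by
  simp only [cdfAt, prob_eq_zero_iff, Set.disjoint_left, Set.mem_ofPred_eq, not_le]

theorem cdfAt_le_cdfAt {P : Profile M W} {p q : PMF (Matching M W)} {a : M ⊕ W}
    (h : ∀ μ ∈ p.support, ∀ ν ∈ q.support, prank P ν a ≤ prank P μ a) (n : ℕ) :
    cdfAt P p a n ≤ cdfAt P q a n := by
  by_cases hp : ∀ μ ∈ p.support, n < prank P μ a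
  · rw [cdfAt_eq_zero_iff.2 hp]
    exact zero_le
  · push Not at hp
    obtain ⟨μ, hμ, hμn⟩ := hp
    have hq : cdfAt P q a n = 1 := prob_eq_one_iff.2 fun ν hν => (h μ hμ ν hν).trans hμn
    rw [hq]
    exact prob_le_one p _

end Cdf

variable {ψ : PMF (Profile M W)} {Y : Set (Profile M W)} {φ φ' : Mechanism M W} {a : M ⊕ W}

theorem cdfCond_eq_zero_iff {n : ℕ} :
    cdfCond ψ Y φ a n = 0 ↔
      ∀ P ∈ Y, P ∈ ψ.support → ∀ μ ∈ (φ P).support, n < prank P μ a := by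
  have hY : prob ψ Y ≠ ⊤ := ne_top_of_le_ne_top ENNReal.one_ne_top (prob_le_one ψ Y)
  rw [cdfCond, ENNReal.div_eq_zero_iff, or_iff_left hY]
  simp only [ENNReal.tsum_eq_zero, Set.indicator_apply_eq_zero, mul_eq_zero, cdfAt_eq_zero_iff,
    PMF.mem_support_iff, or_iff_not_imp_left, ne_eq]

theorem cdfCond_le_cdfCond
    (h : ∀ P ∈ Y, P ∈ ψ.support → ∀ μ ∈ (φ P).support, ∀ ν ∈ (φ' P).support,
      prank P ν a ≤ prank P μ a) :
    cdfCond ψ Y φ a ≤ cdfCond ψ Y φ' a := by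
  intro n
  refine ENNReal.div_le_div_right (ENNReal.tsum_le_tsum fun P => ?_) _
  refine Set.indicator_le_indicator' fun hP => ?_
  by_cases hψ : P ∈ ψ.support
  · exact mul_le_mul_right (cdfAt_le_cdfAt (h P hP hψ) n) _
  · simp only [(ψ.apply_eq_zero_iff P).2 hψ, zero_mul, le_refl]

theorem SD.le_prank_of_le_prank (hSD : SD (cdfCond ψ Y φ' a) (cdfCond ψ Y φ a)) {k : ℕ}
    (hk : ∀ P ∈ Y, P ∈ ψ.support → ∀ μ ∈ (φ' P).support, k ≤ prank P μ a)
    {P : Profile M W} (hP : P ∈ Y) (hψ : P ∈ ψ.support) {ν : Matching M W}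
    (hν : ν ∈ (φ P).support) : k ≤ prank P ν a := by
  by_contra! hlt
  have hφ' : cdfCond ψ Y φ' a (prank P ν a) = 0 :=
    cdfCond_eq_zero_iff.2 fun Q hQ hQψ μ hμ => hlt.trans_le (hk Q hQ hQψ μ hμ)
  have hφ : cdfCond ψ Y φ a (prank P ν a) = 0 :=
    le_zero_iff.1 ((hSD.1 _).trans_eq hφ')
  exact (cdfCond_eq_zero_iff.1 hφ P hP hψ ν hν).false

theorem SD.rankOf_le_prank (hSD : SD (cdfCond ψ Y φ' a) (cdfCond ψ Y φ a))
    {P : Profile M W} (hY : ∀ Q ∈ Y, prefEq Q P a)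
    (hφ : ∀ Q, ∀ ν ∈ (φ Q).support, prank Q ν a ≤ urank Q a) {b : M ⊕ W}
    (hφ' : ∀ Q, ∀ μ ∈ (φ' Q).support, μ.toFun a = a ∨ μ.toFun a = b)
    (hP : P ∈ Y) (hψ : P ∈ ψ.support) {ν : Matching M W} (hν : ν ∈ (φ P).support) :
    rankOf P a b ≤ prank P ν a := by
  have hprank : ∀ Q ∈ Y, ∀ μ ∈ (φ' Q).support,
      prank Q μ a = rankOf P a a ∨ prank Q μ a = rankOf P a b := by
    intro Q hQ μ hμ
    rw [prank_eq_rankOf, rankOf_congr (hY Q hQ)]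
    exact (hφ' Q μ hμ).imp (congrArg _) (congrArg _)
  rcases le_or_gt (rankOf P a b) (rankOf P a a) with hacceptable | hunacceptable
  · refine hSD.le_prank_of_le_prank (fun Q hQ _ μ hμ => ?_) hP hψ hν
    rcases hprank Q hQ μ hμ with h | h <;> omega
  · refine absurd (cdfCond_le_cdfCond fun Q hQ _ μ hμ ν hν => ?_) (sd_iff_lt.1 hSD).not_ge
    have hrational := hφ Q ν hν
    rw [← rankOf_self, rankOf_congr (hY Q hQ)] at hrational
    rcases hprank Q hQ μ hμ with h | h <;> omega

section Coalition

omit [DecidableEq M] [DecidableEq W]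

variable {A' : Set (M ⊕ W)} {R : M ⊕ W → Set (Profile M W)} {P Q : Profile M W}

theorem mem_interimEvent_self (hP : ∀ b ∈ A', P ∈ R b) : P ∈ interimEvent A' R a P :=
  ⟨prefEq_refl P a, fun b hb _ => hP b hb⟩

theorem mem_of_mem_interimEvent (hR : ∀ P P', prefEq P P' a → (P ∈ R a ↔ P' ∈ R a))
    (hP : P ∈ R a) (hQ : Q ∈ interimEvent A' R a P) : ∀ b ∈ A', Q ∈ R b := by
  intro b hb
  rcases eq_or_ne b a with rfl | hba
  · exact (hR Q P hQ.1).2 hP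
  · exact hQ.2 b hb hba

end Coalition

section PairCoalition

omit [Fintype M] [DecidableEq M] [Fintype W] [DecidableEq W]

variable {A' : Set (M ⊕ W)}

theorem IsPairCoalition.injOn_isLeft (hA' : IsPairCoalition A') : Set.InjOn Sum.isLeft A' := by
  rintro (m | w) ha (m' | w') hb hab
  · exact congrArg _ (hA'.1 ha hb)
  · contradiction
  · contradiction
  · exact congrArg _ (hA'.2 ha hb)

theorem IsPairCoalition.eq_or_eq (hA' : IsPairCoalition A') {a b c : M ⊕ W} (ha : a ∈ A')
    (hb : b ∈ A') (hab : a ≠ b) (hc : c ∈ A') : c = a ∨ c = b := by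
  have hside : a.isLeft ≠ b.isLeft := hA'.injOn_isLeft.ne ha hb hab
  rcases eq_or_ne c.isLeft a.isLeft with hca | hca
  · exact .inl (hA'.injOn_isLeft hc ha hca)
  · exact .inr (hA'.injOn_isLeft hc hb ((Bool.eq_not.2 hca).trans (Bool.not_eq.2 hside)))

end PairCoalition

/-- Any mechanism that produces a stable matching with certainty
is interim pairwise stable. -/
theorem stableMechanism_interimPairwiseStable (φ : Mechanism M W)
    (hφ : ∀ P : Profile M W, prob (φ P) {μ | IsStable P μ} = 1) :
    InterimPairwiseStable φ := by
  rintro ψ A' hA' ⟨⟨a, ha⟩, φ', R, hR, hclosed, haccept, hpos⟩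
  have hstable (P : Profile M W) {ν} (hν : ν ∈ (φ P).support) : IsStable P ν :=
    prob_eq_one_iff.1 (hφ P) hν
  have hpartner {b} (hb : b ∈ A') {P μ} (hμ : μ ∈ (φ' P).support) : μ.toFun b ∈ A' :=
    prob_eq_one_iff.1 (hclosed b hb P) hμ
  obtain ⟨P, -, hP⟩ : (ψ.support ∩ {P | ∀ b ∈ A', P ∈ R b}).Nonempty :=
    Set.not_disjoint_iff_nonempty_inter.1 (prob_eq_zero_iff.not.1 hpos.ne')
  refine (sd_iff_lt.1 ((haccept a ha P).1 (hP a ha)).2).not_ge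
    (cdfCond_le_cdfCond fun Q hQ hQψ μ hμ ν hν => ?_)
  have hQR : ∀ b ∈ A', Q ∈ R b := mem_of_mem_interimEvent (hR a) (hP a ha) hQ
  rw [prank_eq_rankOf Q μ]
  rcases eq_or_ne (μ.toFun a) a with hsingle | hmatched
  · rw [hsingle, rankOf_self]
    exact (hstable Q hν).1 a
  have hb : μ.toFun a ∈ A' := hpartner ha hμ
  exact (hstable Q hν).prank_le_rankOf <|
    ((haccept _ hb Q).1 (hQR _ hb)).2.rankOf_le_prank (fun _ h => h.1)
      (fun Q' ν' hν' => (hstable Q' hν').1 _)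
      (fun _ _ hμ' => hA'.eq_or_eq hb ha hmatched (hpartner hb hμ'))
      (mem_interimEvent_self hQR) hQψ hν

end Unraveling
end

section
/- Let M = {m1, m2, m3}, W = {w1, w2, w3}, p ∈ (0, 1), and let the prior be: m2 and m3 each rank (w1, w2, w3, unmatched) with certainty; m1 ranks (w1, w2, w3, unmatched) with probability 1−p and (w3, w1, w2, unmatched) with probability p; w2 and w3 each rank (m1, m2, m3, unmatched) with certainty; w1 ranks (m1, m2, m3, unmatched) with probability 1−p and (m3, m1, m2, unmatched) with probability p; the draws for m1 and w1 are independent. Then every profile in the support of this prior has a unique stable matching, and under the mechanism that outputs the unique stable matching, the rank m2 assigns to his partner equals 1 with probability p(1−p), equals 2 with probability (1−p)² + p², and equals 3 with probability p(1−p); the same distribution holds for the rank w2 assigns to her partner. -/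
open scoped ENNReal

namespace Unraveling

/-! In each of the four profiles the couples of the stable matching can be formed one after the
other, each of two partners being the favourite of the other among the agents still present. By
induction over the stages, such a matching is the only stable one. Its couples are

* `(m1, w1), (m2, w2), (m3, w3)` if neither `m1` nor `w1` deviates from the common ranking,
* `(m1, w3), (m2, w1), (m3, w2)` if only `m1` does,
* `(m3, w1), (m1, w2), (m2, w3)` if only `w1` does,
* `(m3, w1), (m1, w3), (m2, w2)` if both do,

so `m2` gets rank 2 if both or neither deviate, rank 1 if only `m1` does and rank 3 if only `w1`
does; for `w2` the last two cases are exchanged. -/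

section Stability

variable {M W : Type*}

namespace Matching

variable {μ : Matching M W} {m : M} {w : W}

theorem partnerM_eq_some_iff : μ.partnerM m = some w ↔ μ.toFun (Sum.inl m) = Sum.inr w := by
  unfold partnerM
  cases μ.toFun (Sum.inl m) <;> simp

theorem partnerW_eq_some_iff : μ.partnerW w = some m ↔ μ.toFun (Sum.inr w) = Sum.inl m := by
  unfold partnerW
  cases μ.toFun (Sum.inr w) <;> simp

theorem partnerM_eq_some_iff_partnerW_eq_some : μ.partnerM m = some w ↔ μ.partnerW w = some m := by
  rw [partnerM_eq_some_iff, partnerW_eq_some_iff, μ.mutual_cond]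

theorem toFun_injective : Function.Injective (toFun : Matching M W → M ⊕ W → M ⊕ W) := by
  rintro ⟨_, _, _, _⟩ ⟨_, _, _, _⟩ rfl
  rfl

theorem eq_matchingOf_of_partnerM {e : M ≃ W} (h : ∀ m, μ.partnerM m = some (e m)) :
    μ = matchingOf e := by
  apply toFun_injective
  funext a
  rcases a with m | w
  · exact partnerM_eq_some_iff.1 (h m)
  · exact partnerW_eq_some_iff.1
      (partnerM_eq_some_iff_partnerW_eq_some.1 (by rw [h, e.apply_symm_apply]))

end Matching

variable [Fintype M] [Fintype W]

/-- Eeckhout's sequential preference condition: the couples `(m, e m)` can be formed stage by stage,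
each partner preferring the other to everybody of the same or a later stage and to remaining
unmatched. Several couples may share a stage. -/
structure IsSequentiallyBest (P : Profile M W) (e : M ≃ W) (stage : M → ℕ) : Prop where
  mrank_lt : ∀ ⦃m m'⦄, m ≠ m' → stage m ≤ stage m' →
    mrank P m (some (e m)) < mrank P m (some (e m'))
  wrank_lt : ∀ ⦃m m'⦄, m ≠ m' → stage m ≤ stage m' →
    wrank P (e m) (some m) < wrank P (e m) (some m')
  mrank_lt_none : ∀ m, mrank P m (some (e m)) < mrank P m none
  wrank_lt_none : ∀ m, wrank P (e m) (some m) < wrank P (e m) none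

namespace IsSequentiallyBest

variable {P : Profile M W} {e : M ≃ W} {stage : M → ℕ} {μ : Matching M W} {m : M}

theorem isStable_matchingOf (h : IsSequentiallyBest P e stage) : IsStable P (matchingOf e) := by
  constructor
  · rintro (m | w)
    · exact (h.mrank_lt_none m).le
    · simpa [prank, urank, Matching.partnerW, matchingOf] using (h.wrank_lt_none (e.symm w)).le
  · intro m w hm
    obtain ⟨m', rfl⟩ := e.surjective w
    have hm : mrank P m (some (e m')) < mrank P m (some (e m)) := hm
    have hne : m' ≠ m := by
      rintro rfl
      exact hm.false
    have hstage : stage m' ≤ stage m :=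
      le_of_not_ge fun hle => (h.mrank_lt hne.symm hle).asymm hm
    simpa [prank, Matching.partnerW, matchingOf] using h.wrank_lt hne hstage

theorem mrank_lt_prank (h : IsSequentiallyBest P e stage)
    (hearlier : ∀ m', stage m' < stage m → μ.partnerM m' = some (e m'))
    (hne : μ.partnerM m ≠ some (e m)) : mrank P m (some (e m)) < prank P μ (Sum.inl m) := by
  simp only [prank]
  rcases hw : μ.partnerM m with _ | w
  · exact h.mrank_lt_none m
  · obtain ⟨m', rfl⟩ := e.surjective w
    have hm' : m ≠ m' := by
      rintro rfl
      exact hne hw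
    refine h.mrank_lt hm' (le_of_not_gt fun hlt => hm' ?_)
    rw [Matching.partnerM_eq_some_iff_partnerW_eq_some] at hw
    have hw' := Matching.partnerM_eq_some_iff_partnerW_eq_some.1 (hearlier m' hlt)
    exact Option.some_injective _ (hw.symm.trans hw')

theorem wrank_lt_prank (h : IsSequentiallyBest P e stage)
    (hearlier : ∀ m', stage m' < stage m → μ.partnerM m' = some (e m'))
    (hne : μ.partnerM m ≠ some (e m)) : wrank P (e m) (some m) < prank P μ (Sum.inr (e m)) := by
  simp only [prank]
  rcases hw : μ.partnerW (e m) with _ | m'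
  · exact h.wrank_lt_none m
  · rw [← Matching.partnerM_eq_some_iff_partnerW_eq_some] at hw
    have hm' : m ≠ m' := by
      rintro rfl
      exact hne hw
    refine h.wrank_lt hm' (le_of_not_gt fun hlt => hm' ?_)
    exact e.injective (Option.some_injective _ (hw.symm.trans (hearlier m' hlt)))

theorem partnerM_eq_of_isStable (h : IsSequentiallyBest P e stage) (hμ : IsStable P μ) (m : M) :
    μ.partnerM m = some (e m) := by
  induction hs : stage m using Nat.strong_induction_on generalizing m with
  | _ s ih =>
    subst hs
    have hearlier : ∀ m', stage m' < stage m → μ.partnerM m' = some (e m') :=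
      fun m' hlt => ih _ hlt m' rfl
    by_contra hne
    -- Otherwise `m` and `e m` block: whoever they might prefer to each other is already taken.
    exact (hμ.2 m (e m) (h.mrank_lt_prank hearlier hne)).asymm (h.wrank_lt_prank hearlier hne)

theorem isStable_iff_eq_matchingOf (h : IsSequentiallyBest P e stage) :
    IsStable P μ ↔ μ = matchingOf e :=
  ⟨fun hμ => Matching.eq_matchingOf_of_partnerM (h.partnerM_eq_of_isStable hμ),
    fun hμ => hμ ▸ h.isStable_matchingOf⟩

end IsSequentiallyBest

end Stability

section RankProbabilities

theorem prob_pure {α : Type*} (a : α) (s : Set α) [Decidable (a ∈ s)] :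
    prob (PMF.pure a) s = if a ∈ s then 1 else 0 := by
  rw [prob, ← PMF.toOuterMeasure_apply, PMF.toOuterMeasure_pure_apply]
  congr

variable {M W ι : Type*} [Fintype M] [DecidableEq M] [Fintype W] [DecidableEq W] [Fintype ι]
  {ψ : PMF (Profile M W)} {φ : Mechanism M W} {P : ι → Profile M W} {q : ι → ℝ≥0∞}

open Classical in
theorem probRankEq_eq_sum (hψ : ∀ P', ψ P' = ∑ i, if P' = P i then q i else 0)
    (a : M ⊕ W) (k : ℕ) :
    probRankEq ψ φ a k = ∑ i, q i * prob (φ (P i)) {μ | prank (P i) μ a = k} := by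
  simp only [probRankEq, hψ, Finset.sum_mul, ite_mul, zero_mul]
  rw [Summable.tsum_finsetSum fun _ _ => ENNReal.summable]
  simp only [tsum_ite_eq]

open Classical in
theorem probRankEq_eq_sum_of_eq_pure (hψ : ∀ P', ψ P' = ∑ i, if P' = P i then q i else 0)
    {ν : ι → Matching M W} (hφ : ∀ i, 0 < ψ (P i) → φ (P i) = PMF.pure (ν i))
    (a : M ⊕ W) (k : ℕ) :
    probRankEq ψ φ a k = ∑ i, if prank (P i) (ν i) a = k then q i else 0 := by
  rw [probRankEq_eq_sum hψ]
  refine Finset.sum_congr rfl fun i _ => ?_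
  rcases (zero_le : 0 ≤ q i).eq_or_lt with hq | hq
  · simp [← hq]
  · have hle : q i ≤ ψ (P i) := by
      rw [hψ]
      simpa using Finset.single_le_sum_of_canonicallyOrdered
        (f := fun j => if P i = P j then q j else 0) (Finset.mem_univ i)
    simp [hφ i (hq.trans_le hle), prob_pure]

end RankProbabilities

section Rankings

variable {α : Type*} [Fintype α]

/-- The ranking of potential partners by `σ`, with remaining unmatched in the last place.
Ranks start from `0` here, and from `1` in `mrank` and `wrank`. -/
def rankingOf (σ : α ≃ Fin (Fintype.card α)) : Option α ≃ Fin (Fintype.card α + 1) :=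
  σ.optionCongr.trans finSuccEquivLast.symm

theorem val_rankingOf_some (σ : α ≃ Fin (Fintype.card α)) (x : α) :
    (rankingOf σ (some x) : ℕ) = σ x := by
  simp [rankingOf]

theorem val_rankingOf_none (σ : α ≃ Fin (Fintype.card α)) :
    (rankingOf σ none : ℕ) = Fintype.card α := by
  simp [rankingOf]

theorem eq_rankingOf_iff {σ : α ≃ Fin (Fintype.card α)}
    {e : Option α ≃ Fin (Fintype.card α + 1)} :
    e = rankingOf σ ↔
      (∀ x, (e (some x) : ℕ) + 1 = σ x + 1) ∧ (e none : ℕ) + 1 = Fintype.card α + 1 := by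
  simp [Equiv.ext_iff, Option.forall, Fin.ext_iff, val_rankingOf_some, val_rankingOf_none, and_comm]

end Rankings

section Example

/-- An agent's ranking of the other side in the example: the common order, or the order putting
index `2` first if the agent deviates. -/
def exampleRanking (deviates : Bool) : Option (Fin 3) ≃ Fin (Fintype.card (Fin 3) + 1) :=
  rankingOf (if deviates then finRotate 3 else Equiv.refl _)

/-- The profile of the example in which `i` and `j` tell whether `m1` and `w1` deviate from the
common order. The agents of either side are numbered from `0`. -/
def exampleProfile (i j : Bool) : Profile (Fin 3) (Fin 3) where
  mpref := ![exampleRanking i, exampleRanking false, exampleRanking false]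
  wpref := ![exampleRanking j, exampleRanking false, exampleRanking false]

/-- The couples of the stable matching at `exampleProfile i j`, as a map from men to women. -/
def exampleCouples : Bool → Bool → (Fin 3 ≃ Fin 3)
  | false, false => Equiv.refl _
  | true, false => (finRotate 3).symm
  | false, true => finRotate 3
  | true, true => Fin.revPerm

/-- The stage at which a man of the example finds his partner: if `w1` deviates, `m3` comes
first. -/
def exampleStage (j : Bool) (m : Fin 3) : ℕ :=
  if j then finRotate 3 m else m

/-- The ranks, starting from `1`, that `exampleRanking` assigns to the other side. -/
def exampleRanks : Bool → Fin 3 → ℕ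
  | false => ![1, 2, 3]
  | true => ![2, 3, 1]

/-- The probability that an agent who deviates with probability `p` does or does not deviate. -/
noncomputable def deviationProb (p : ℝ≥0∞) (deviates : Bool) : ℝ≥0∞ :=
  if deviates then p else 1 - p

/-- The prior probability of a profile in the example. -/
noncomputable def exampleMass (p : ℝ≥0∞) (P : Profile (Fin 3) (Fin 3)) : ℝ≥0∞ :=
  if MRanks P 1 (exampleRanks false) 4 ∧ MRanks P 2 (exampleRanks false) 4 ∧
      WRanks P 1 (exampleRanks false) 4 ∧ WRanks P 2 (exampleRanks false) 4 then
    (if MRanks P 0 (exampleRanks false) 4 then 1 - p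
      else if MRanks P 0 (exampleRanks true) 4 then p else 0) *
    (if WRanks P 0 (exampleRanks false) 4 then 1 - p
      else if WRanks P 0 (exampleRanks true) 4 then p else 0)
  else 0

variable {P : Profile (Fin 3) (Fin 3)}

theorem eq_exampleRanking_iff {b : Bool}
    {e : Option (Fin 3) ≃ Fin (Fintype.card (Fin 3) + 1)} :
    e = exampleRanking b ↔
      (∀ x, (e (some x) : ℕ) + 1 = exampleRanks b x) ∧ (e none : ℕ) + 1 = 4 := by
  have hranks : ∀ b x, ((if b then finRotate 3 else Equiv.refl _ : Fin 3 ≃ Fin 3) x : ℕ) + 1 =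
      exampleRanks b x := by decide
  simp only [← hranks]
  exact eq_rankingOf_iff

theorem mRanks_exampleRanks_iff {m : Fin 3} {b : Bool} :
    MRanks P m (exampleRanks b) 4 ↔ P.mpref m = exampleRanking b :=
  eq_exampleRanking_iff.symm

theorem wRanks_exampleRanks_iff {w : Fin 3} {b : Bool} :
    WRanks P w (exampleRanks b) 4 ↔ P.wpref w = exampleRanking b :=
  eq_exampleRanking_iff.symm

theorem exampleRanking_true_ne_false : exampleRanking true ≠ exampleRanking false := by
  decide

theorem eq_exampleProfile_iff {i j : Bool} :
    P = exampleProfile i j ↔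
      (P.mpref 1 = exampleRanking false ∧ P.mpref 2 = exampleRanking false ∧
        P.wpref 1 = exampleRanking false ∧ P.wpref 2 = exampleRanking false) ∧
      P.mpref 0 = exampleRanking i ∧ P.wpref 0 = exampleRanking j := by
  refine ⟨?_, ?_⟩
  · rintro rfl
    simp [exampleProfile]
  · rintro ⟨⟨hm₂, hm₃, hw₂, hw₃⟩, hm₁, hw₁⟩
    cases P
    simp_all [exampleProfile, funext_iff, Fin.forall_fin_succ]

open Classical in
theorem sum_ite_eq_exampleRanking (p : ℝ≥0∞) (e : Option (Fin 3) ≃ Fin (Fintype.card (Fin 3) + 1)) :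
    ∑ b, (if e = exampleRanking b then deviationProb p b else 0) =
      if e = exampleRanking false then 1 - p else if e = exampleRanking true then p else 0 := by
  by_cases he : e = exampleRanking false
  · simp [he, exampleRanking_true_ne_false.symm, deviationProb]
  · simp [he, deviationProb]

open Classical in
theorem exampleMass_eq_sum (p : ℝ≥0∞) :
    exampleMass p P = ∑ t : Bool × Bool,
      if P = exampleProfile t.1 t.2 then deviationProb p t.1 * deviationProb p t.2 else 0 := by
  simp only [exampleMass, mRanks_exampleRanks_iff, wRanks_exampleRanks_iff,
    eq_exampleProfile_iff, ← sum_ite_eq_exampleRanking]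
  split_ifs with hcommon
  · simp only [hcommon, true_and, Finset.sum_mul_sum, Fintype.sum_prod_type, ite_zero_mul_ite_zero]
  · simp only [hcommon, false_and, if_false, Finset.sum_const_zero]

theorem isSequentiallyBest_exampleCouples (i j : Bool) :
    IsSequentiallyBest (exampleProfile i j) (exampleCouples i j) (exampleStage j) where
  mrank_lt := by unfold exampleStage; revert i j; decide
  wrank_lt := by unfold exampleStage; revert i j; decide
  mrank_lt_none := by revert i j; decide
  wrank_lt_none := by revert i j; decide

theorem prank_example_inl_one (i j : Bool) :
    prank (exampleProfile i j) (matchingOf (exampleCouples i j)) (Sum.inl 1) =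
      if i = j then 2 else if i then 1 else 3 := by
  revert i j; decide

theorem prank_example_inr_one (i j : Bool) :
    prank (exampleProfile i j) (matchingOf (exampleCouples i j)) (Sum.inr 1) =
      if i = j then 2 else if i then 3 else 1 := by
  revert i j; decide

end Example

/-- In the Appendix A example (with `p ∈ (0,1)`; `m2, m3` rank
`(w1,w2,w3,∅)` and `w2, w3` rank `(m1,m2,m3,∅)` with certainty; `m1` ranks
`(w1,w2,w3,∅)` w.p. `1-p` and `(w3,w1,w2,∅)` w.p. `p`; `w1` ranks `(m1,m2,m3,∅)`
w.p. `1-p` and `(m3,m1,m2,∅)` w.p. `p`, independently), every profile in the support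
has a unique stable matching, and under the mechanism outputting it, `m2` (and
likewise `w2`) gets rank 1 w.p. `p(1-p)`, rank 2 w.p. `(1-p)² + p²`, and rank 3
w.p. `p(1-p)`. -/
theorem appendixA_rank_distribution (p : ℝ≥0∞) (hp0 : 0 < p) (hp1 : p < 1)
    (ψ : PMF (Profile (Fin 3) (Fin 3)))
    (hψ : ∀ P : Profile (Fin 3) (Fin 3),
      ψ P = if MRanks P 1 ![1, 2, 3] 4 ∧ MRanks P 2 ![1, 2, 3] 4 ∧
              WRanks P 1 ![1, 2, 3] 4 ∧ WRanks P 2 ![1, 2, 3] 4 then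
          (if MRanks P 0 ![1, 2, 3] 4 then 1 - p
            else if MRanks P 0 ![2, 3, 1] 4 then p else 0) *
          (if WRanks P 0 ![1, 2, 3] 4 then 1 - p
            else if WRanks P 0 ![2, 3, 1] 4 then p else 0)
        else 0)
    (φ : Mechanism (Fin 3) (Fin 3))
    (hφ : ∀ P : Profile (Fin 3) (Fin 3), 0 < ψ P →
      ∀ μ : Matching (Fin 3) (Fin 3), IsStable P μ → φ P = PMF.pure μ) :
    (∀ P : Profile (Fin 3) (Fin 3), 0 < ψ P → ∃! μ : Matching (Fin 3) (Fin 3), IsStable P μ) ∧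
    (probRankEq ψ φ (Sum.inl 1) 1 = p * (1 - p) ∧
      probRankEq ψ φ (Sum.inl 1) 2 = (1 - p) ^ 2 + p ^ 2 ∧
      probRankEq ψ φ (Sum.inl 1) 3 = p * (1 - p)) ∧
    (probRankEq ψ φ (Sum.inr 1) 1 = p * (1 - p) ∧
      probRankEq ψ φ (Sum.inr 1) 2 = (1 - p) ^ 2 + p ^ 2 ∧
      probRankEq ψ φ (Sum.inr 1) 3 = p * (1 - p)) := by
  classical
  have hmass (P) : ψ P = ∑ t : Bool × Bool,
      if P = exampleProfile t.1 t.2 then deviationProb p t.1 * deviationProb p t.2 else 0 :=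
    (hψ P).trans (exampleMass_eq_sum p)
  have hstable (i j) := isSequentiallyBest_exampleCouples i j
  have hrank := probRankEq_eq_sum_of_eq_pure hmass
    fun t ht => hφ _ ht _ (hstable t.1 t.2).isStable_matchingOf
  refine ⟨fun P hP => ?_, ?_, ?_⟩
  · rw [hmass] at hP
    obtain ⟨t, -, ht⟩ := Finset.exists_ne_zero_of_sum_ne_zero hP.ne'
    obtain rfl : P = exampleProfile t.1 t.2 := of_not_not fun hne => ht (if_neg hne)
    simp only [(hstable t.1 t.2).isStable_iff_eq_matchingOf, existsUnique_eq]
  · simp only [hrank, prank_example_inl_one, Fintype.sum_prod_type, Fintype.sum_bool]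
    refine ⟨?_, ?_, ?_⟩ <;> simp [deviationProb, sq, mul_comm, add_comm]
  · simp only [hrank, prank_example_inr_one, Fintype.sum_prod_type, Fintype.sum_bool]
    refine ⟨?_, ?_, ?_⟩ <;> simp [deviationProb, sq, mul_comm, add_comm]

end Unraveling
end
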